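/- For all integers q₁, q₂ > 1, all primitive quadratic Dirichlet characters χ₁ mod q₁ and χ₂ mod q₂, every real number w, and every real x ≥ 1, the partial sum satisfies A₀(x,w) ≥ 1. -/

import Mathlib

open Finset

/-- The Dirichlet series coefficients of
`f(s) = ζ(s) L(s,χ₁) L(s,χ₂) L(s,χ₁χ₂)`, given explicitly by
`a n = Σ_{j k l m = n} χ₁(k) χ₂(l) χ₁(m) χ₂(m)`. -/
noncomputable def goldfeldCoeff {q₁ q₂ : ℕ} (χ₁ : DirichletCharacter ℂ q₁)
    (χ₂ : DirichletCharacter ℂ q₂) (n : ℕ) : ℂ :=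
  ∑ p ∈ n.divisorsAntidiagonal, ∑ r ∈ p.2.divisorsAntidiagonal,
    ∑ t ∈ r.2.divisorsAntidiagonal,
      χ₁ (r.1 : ZMod q₁) * χ₂ (t.1 : ZMod q₂) * χ₁ (t.2 : ZMod q₁) * χ₂ (t.2 : ZMod q₂)

/-- The partial sum `A₀(x,w) = Σ_{n ≤ x} a n * n ^ (-w)`. -/
noncomputable def goldfeldA₀ {q₁ q₂ : ℕ} (χ₁ : DirichletCharacter ℂ q₁)
    (χ₂ : DirichletCharacter ℂ q₂) (x w : ℝ) : ℂ :=
  ∑ n ∈ Icc 1 ⌊x⌋₊, goldfeldCoeff χ₁ χ₂ n * (((n : ℝ) ^ (-w) : ℝ) : ℂ)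

/-!
The negative logarithmic derivative of `f` is the Dirichlet series
`-f'(s) / f(s) = ∑ Λ(n) (1 + χ₁(n) + χ₂(n) + χ₁(n) χ₂(n)) n⁻ˢ = ∑ Λ(n) (1 + χ₁(n)) (1 + χ₂(n)) n⁻ˢ`,
and its coefficients are nonnegative because `χ₁` and `χ₂` take values in `{0, 1, -1}`. Comparing
coefficients in `-f' = f · (-f' / f)` expresses `a n * log n` as a combination of the `a d` with
`d < n` with nonnegative weights, so `a 1 = 1` propagates to `a n ≥ 0` for all `n`, and the term
`n = 1` alone bounds the partial sums from below.
-/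

open ArithmeticFunction
open scoped ArithmeticFunction.zeta ComplexOrder

section Algebra

variable {R : Type*} [CommSemiring R]

/-- The twist `n ↦ f n * F n` of an arithmetic function by a completely multiplicative `f`. The
value `f 0` is irrelevant because `F 0 = 0`, so a Dirichlet character of any modulus qualifies as
`f`. -/
def dirichletTwist (f : ℕ →* R) (F : ArithmeticFunction R) : ArithmeticFunction R :=
  ⟨fun n => f n * F n, by simp⟩

@[simp]
lemma dirichletTwist_apply (f : ℕ →* R) (F : ArithmeticFunction R) (n : ℕ) :
    dirichletTwist f F n = f n * F n := rfl

lemma dirichletTwist_mul (f : ℕ →* R) (F G : ArithmeticFunction R) :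
    dirichletTwist f (F * G) = dirichletTwist f F * dirichletTwist f G := by
  ext n
  simp only [dirichletTwist_apply, mul_apply, Finset.mul_sum]
  refine sum_congr rfl fun p hp => ?_
  rw [← (Nat.mem_divisorsAntidiagonal.mp hp).1, map_mul, mul_mul_mul_comm]

lemma dirichletTwist_zeta_apply (f : ℕ →* R) {n : ℕ} (hn : n ≠ 0) :
    dirichletTwist f ζ n = f n := by
  simp [hn]

/-- The coefficients of `ζ(s) L(s,f) L(s,g) L(s,fg)` for completely multiplicative `f` and `g`.
For independent quadratic characters this is, up to Euler factors, the Dedekind zeta function of a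
biquadratic field, whence the name. -/
def biquadraticCoeff (f g : ℕ →* R) : ArithmeticFunction R :=
  ζ * (dirichletTwist f ζ * (dirichletTwist g ζ * dirichletTwist (f * g) ζ))

lemma biquadraticCoeff_apply_one (f g : ℕ →* R) : biquadraticCoeff f g 1 = 1 := by
  simp [biquadraticCoeff]

variable [Algebra ℝ R]

/-- The arithmetic function `n ↦ log n • F n`; on Dirichlet series this is the derivation
`-d/ds`. -/
noncomputable def mulLog (F : ArithmeticFunction R) : ArithmeticFunction R :=
  ⟨fun n => Real.log n • F n, by simp⟩

@[simp]
lemma mulLog_apply (F : ArithmeticFunction R) (n : ℕ) : mulLog F n = Real.log n • F n := rfl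

lemma mulLog_mul (F G : ArithmeticFunction R) : mulLog (F * G) = mulLog F * G + F * mulLog G := by
  ext n
  simp only [mulLog_apply, ArithmeticFunction.add_apply, mul_apply, smul_sum, ← sum_add_distrib]
  refine sum_congr rfl fun p hp => ?_
  have hp₁ : (p.1 : ℝ) ≠ 0 := mod_cast (Nat.ne_zero_of_mem_divisorsAntidiagonal hp).1
  have hp₂ : (p.2 : ℝ) ≠ 0 := mod_cast (Nat.ne_zero_of_mem_divisorsAntidiagonal hp).2
  rw [← (Nat.mem_divisorsAntidiagonal.mp hp).1, Nat.cast_mul, Real.log_mul hp₁ hp₂, add_smul,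
    smul_mul_assoc, mul_smul_comm]

lemma mulLog_dirichletTwist (f : ℕ →* R) (F : ArithmeticFunction R) :
    mulLog (dirichletTwist f F) = dirichletTwist f (mulLog F) := by
  ext n
  simp

/-- `G` is the logarithmic derivative of `F` for the derivation `mulLog`; on Dirichlet series this
means `-F' = F * G`. -/
def HasLogDeriv (F G : ArithmeticFunction R) : Prop := mulLog F = F * G

namespace HasLogDeriv

variable {F F' G G' : ArithmeticFunction R}

lemma mul (h : HasLogDeriv F G) (h' : HasLogDeriv F' G') : HasLogDeriv (F * F') (G + G') := by
  unfold HasLogDeriv at *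
  rw [mulLog_mul, h, h']
  ring

lemma dirichletTwist (h : HasLogDeriv F G) (f : ℕ →* R) :
    HasLogDeriv (dirichletTwist f F) (dirichletTwist f G) := by
  unfold HasLogDeriv at *
  rw [mulLog_dirichletTwist, h, dirichletTwist_mul]

lemma apply_one_eq_zero (h : HasLogDeriv F G) (hF : F 1 = 1) : G 1 = 0 := by
  simpa [hF] using (DFunLike.congr_fun h 1).symm

end HasLogDeriv

variable (R) in
/-- The von Mangoldt function with values in a real algebra. -/
noncomputable def algebraVonMangoldt : ArithmeticFunction R :=
  ⟨fun n => algebraMap ℝ R (Λ n), by simp⟩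

@[simp]
lemma algebraVonMangoldt_apply (n : ℕ) : algebraVonMangoldt R n = algebraMap ℝ R (Λ n) := rfl

lemma hasLogDeriv_zeta : HasLogDeriv (ζ : ArithmeticFunction R) (algebraVonMangoldt R) := by
  ext n
  simp only [mulLog_apply, coe_zeta_mul_apply, algebraVonMangoldt_apply, ← map_sum,
    vonMangoldt_sum]
  rcases eq_or_ne n 0 with rfl | hn
  · simp
  · simp [hn, Algebra.algebraMap_eq_smul_one]

lemma exists_hasLogDeriv_biquadraticCoeff (f g : ℕ →* R) :
    ∃ G, HasLogDeriv (biquadraticCoeff f g) G ∧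
      ∀ n, G n = (1 + f n) * (1 + g n) * algebraMap ℝ R (Λ n) := by
  have hζ := hasLogDeriv_zeta (R := R)
  refine ⟨_, hζ.mul ((hζ.dirichletTwist f).mul
    ((hζ.dirichletTwist g).mul (hζ.dirichletTwist (f * g)))), fun n => ?_⟩
  simp only [ArithmeticFunction.add_apply, dirichletTwist_apply, algebraVonMangoldt_apply,
    MonoidHom.mul_apply]
  ring

end Algebra

section Order

variable {R : Type*} [CommSemiring R] [PartialOrder R] [IsOrderedRing R] [Algebra ℝ R]
  [PosSMulMono ℝ R]

lemma HasLogDeriv.nonneg {F G : ArithmeticFunction R} (h : HasLogDeriv F G) (hF : F 1 = 1)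
    (hG : ∀ n, 0 ≤ G n) (n : ℕ) : 0 ≤ F n := by
  induction n using Nat.strong_induction_on with
  | _ n ih =>
    obtain rfl | rfl | hn : n = 0 ∨ n = 1 ∨ 1 < n := by lia
    · simp
    · simp [hF]
    have hlog : 0 < Real.log n := Real.log_pos (mod_cast hn)
    have hmul : 0 ≤ Real.log n • F n := by
      rw [← mulLog_apply, h, mul_apply]
      refine sum_nonneg fun p hp => ?_
      obtain ⟨hp₁, hp₂⟩ := Nat.ne_zero_of_mem_divisorsAntidiagonal hp
      rcases eq_or_ne p.2 1 with hp₂_eq | hp₂_ne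
      · simp [hp₂_eq, h.apply_one_eq_zero hF]
      · have hlt : p.1 < n := by
          rw [← (Nat.mem_divisorsAntidiagonal.mp hp).1]
          exact lt_mul_of_one_lt_right (by lia) (by lia)
        exact mul_nonneg (ih _ hlt) (hG _)
    simpa [smul_smul, hlog.ne'] using smul_nonneg (inv_nonneg.mpr hlog.le) hmul

lemma biquadraticCoeff_nonneg {f g : ℕ →* R} (hf : ∀ n, 0 ≤ 1 + f n) (hg : ∀ n, 0 ≤ 1 + g n)
    (n : ℕ) : 0 ≤ biquadraticCoeff f g n := by
  obtain ⟨G, hG, hG_apply⟩ := exists_hasLogDeriv_biquadraticCoeff f g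
  refine hG.nonneg (biquadraticCoeff_apply_one f g) (fun m => ?_) n
  have hΛ : 0 ≤ algebraMap ℝ R (Λ m) := by
    rw [Algebra.algebraMap_eq_smul_one]
    exact smul_nonneg vonMangoldt_nonneg zero_le_one
  rw [hG_apply]
  exact mul_nonneg (mul_nonneg (hf m) (hg m)) hΛ

end Order

section Goldfeld

variable {q q₁ q₂ : ℕ}

/-- A Dirichlet character as a completely multiplicative function on `ℕ`. -/
noncomputable def dirichletNatHom (χ : DirichletCharacter ℂ q) : ℕ →* ℂ :=
  χ.toMonoidHom.comp (Nat.castRingHom (ZMod q))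

@[simp]
lemma dirichletNatHom_apply (χ : DirichletCharacter ℂ q) (n : ℕ) : dirichletNatHom χ n = χ n := rfl

lemma one_add_dirichletNatHom_nonneg {χ : DirichletCharacter ℂ q} (hχ : χ ^ 2 = 1) (n : ℕ) :
    0 ≤ 1 + dirichletNatHom χ n := by
  rw [dirichletNatHom_apply]
  rcases MulChar.isQuadratic_iff_sq_eq_one.mpr hχ n with h | h | h <;> norm_num [h]

lemma goldfeldCoeff_eq_biquadraticCoeff (χ₁ : DirichletCharacter ℂ q₁)
    (χ₂ : DirichletCharacter ℂ q₂) (n : ℕ) :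
    goldfeldCoeff χ₁ χ₂ n = biquadraticCoeff (dirichletNatHom χ₁) (dirichletNatHom χ₂) n := by
  simp only [goldfeldCoeff, biquadraticCoeff, mul_apply, mul_sum]
  refine sum_congr rfl fun p hp => sum_congr rfl fun r hr => sum_congr rfl fun t ht => ?_
  obtain ⟨hj, -⟩ := Nat.ne_zero_of_mem_divisorsAntidiagonal hp
  obtain ⟨hk, -⟩ := Nat.ne_zero_of_mem_divisorsAntidiagonal hr
  obtain ⟨hl, hm⟩ := Nat.ne_zero_of_mem_divisorsAntidiagonal ht
  rw [dirichletTwist_zeta_apply _ hk, dirichletTwist_zeta_apply _ hl,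
    dirichletTwist_zeta_apply _ hm, natCoe_apply, zeta_apply_ne hj]
  simp only [MonoidHom.mul_apply, dirichletNatHom_apply, Nat.cast_one]
  ring

lemma goldfeldCoeff_one (χ₁ : DirichletCharacter ℂ q₁) (χ₂ : DirichletCharacter ℂ q₂) :
    goldfeldCoeff χ₁ χ₂ 1 = 1 := by
  rw [goldfeldCoeff_eq_biquadraticCoeff, biquadraticCoeff_apply_one]

lemma goldfeldCoeff_nonneg {χ₁ : DirichletCharacter ℂ q₁} {χ₂ : DirichletCharacter ℂ q₂}
    (hχ₁ : χ₁ ^ 2 = 1) (hχ₂ : χ₂ ^ 2 = 1) (n : ℕ) : 0 ≤ goldfeldCoeff χ₁ χ₂ n := by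
  rw [goldfeldCoeff_eq_biquadraticCoeff]
  exact biquadraticCoeff_nonneg (one_add_dirichletNatHom_nonneg hχ₁)
    (one_add_dirichletNatHom_nonneg hχ₂) n

theorem goldfeldA₀_ge_one_general (χ₁ : DirichletCharacter ℂ q₁) (χ₂ : DirichletCharacter ℂ q₂)
    (hχ₁ : χ₁ ^ 2 = 1) (hχ₂ : χ₂ ^ 2 = 1) (w x : ℝ) (hx : 1 ≤ x) :
    ∃ r : ℝ, goldfeldA₀ χ₁ χ₂ x w = (r : ℂ) ∧ 1 ≤ r := by
  have hterm : ∀ n ∈ Icc 1 ⌊x⌋₊, 0 ≤ goldfeldCoeff χ₁ χ₂ n * (((n : ℝ) ^ (-w) : ℝ) : ℂ) :=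
    fun n _ => mul_nonneg (goldfeldCoeff_nonneg hχ₁ hχ₂ n)
      (Complex.zero_le_real.mpr (Real.rpow_nonneg n.cast_nonneg _))
  have hone : 1 ∈ Icc 1 ⌊x⌋₊ := mem_Icc.mpr ⟨le_rfl, (Nat.one_le_floor_iff x).mpr hx⟩
  have hle : 1 ≤ goldfeldA₀ χ₁ χ₂ x w := by
    simpa [goldfeldA₀, goldfeldCoeff_one] using single_le_sum hterm hone
  exact ⟨_, Complex.eq_re_of_ofReal_le hle, (Complex.le_def.mp hle).1⟩

end Goldfeld

/-- For every real `w` and every `x ≥ 1`, the partial sum `A₀(x,w)` is a real number `≥ 1`. -/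
theorem goldfeldA₀_ge_one (q₁ q₂ : ℕ) (hq₁ : 1 < q₁) (hq₂ : 1 < q₂)
    (χ₁ : DirichletCharacter ℂ q₁) (χ₂ : DirichletCharacter ℂ q₂)
    (hχ₁ : χ₁.IsPrimitive) (hχ₁' : χ₁ ≠ 1) (hχ₁'' : χ₁ ^ 2 = 1)
    (hχ₂ : χ₂.IsPrimitive) (hχ₂' : χ₂ ≠ 1) (hχ₂'' : χ₂ ^ 2 = 1)
    (w x : ℝ) (hx : 1 ≤ x) :
    ∃ r : ℝ, goldfeldA₀ χ₁ χ₂ x w = (r : ℂ) ∧ 1 ≤ r :=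
  goldfeldA₀_ge_one_general χ₁ χ₂ hχ₁'' hχ₂'' w x hx
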